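/- arXiv:1309.6917 — 4 statements merged into one kernel-verified Lean document; each statement's English description precedes it below -/
import Mathlib

section
/- Fix l ≥ 1 and κ = (k_1,…,k_l) ∈ (ℤ/2ℤ)^l, and let λ be an l-multipartition of d ≥ 1. Let 1 ≤ r ≤ d, let N = (a,b,j) be the node occupied by r in the row-reading tableau t^λ, let i ∈ ℤ/2ℤ be the residue of N, and let μ be the multipartition whose Young diagram consists of the nodes occupied by 1,…,r in t^λ. Then the diagram of μ has no removable i-nodes below N, and the number of addable i-nodes for μ below N equals β + #{m : j < m ≤ l, k_m = i}, where β = 1 if b is even and β = 0 if b is odd; consequently d_N(μ) = β + #{m : j < m ≤ l, k_m = i}. -/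
/-!
Core definitions: multipartitions, Young diagrams, tableaux, degrees,
in quantum characteristic 2 (residues in ℤ/2ℤ).
Nodes are 0-indexed: the node `(m, a, b)` denotes the box in component `m`,
row `a+1`, column `b+1` of the paper's 1-indexed conventions.
-/

/-- A node: (component, row, column), all 0-indexed. -/
abbrev Node (l : ℕ) := Fin l × ℕ × ℕ

namespace Cyclo

variable {l d : ℕ}

/-- Residue of a node `(m, a, b)`: `κ m + (b - a)` in `ℤ/2ℤ`. -/
def res (κ : Fin l → ZMod 2) (N : Node l) : ZMod 2 :=
  κ N.1 + (N.2.2 : ZMod 2) - (N.2.1 : ZMod 2)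

/-- A set of nodes is (the Young diagram of) a multipartition iff it is
downward closed in rows and columns within each component. -/
def IsDiagram (Y : Set (Node l)) : Prop :=
  ∀ m a b a' b', (m, a, b) ∈ Y → a' ≤ a → b' ≤ b → (m, a', b') ∈ Y

/-- `M` is an addable node for the diagram `Y`. -/
def Addable (Y : Set (Node l)) (M : Node l) : Prop :=
  M ∉ Y ∧ IsDiagram (insert M Y)

/-- `M` is a removable node of the diagram `Y`. -/
def Removable (Y : Set (Node l)) (M : Node l) : Prop :=
  M ∈ Y ∧ IsDiagram (Y \ {M})

/-- `M` is below `N`: strictly later component, or same component and strictly lower row. -/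
def Below (N M : Node l) : Prop :=
  N.1 < M.1 ∨ (N.1 = M.1 ∧ N.2.1 < M.2.1)

/-- `d_N(Y)`: number of addable nodes for `Y` below `N` of the same residue as `N`,
minus the number of removable nodes of `Y` below `N` of the same residue as `N`. -/
noncomputable def dN (κ : Fin l → ZMod 2) (Y : Set (Node l)) (N : Node l) : ℤ :=
  ({M | Addable Y M ∧ res κ M = res κ N ∧ Below N M}.ncard : ℤ)
    - ({M | Removable Y M ∧ res κ M = res κ N ∧ Below N M}.ncard : ℤ)

/-- The Young diagram of the multipartition whose parts are `lam m a` (0-indexed rows). -/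
def diagram (lam : Fin l → ℕ → ℕ) : Set (Node l) :=
  {N | N.2.2 < lam N.1 N.2.1}

/-- `lam` encodes an `l`-multipartition of `d`: each component is a partition
(antitone, vanishing beyond row `d`) and the sizes sum to `d`. -/
def IsMultipartition (lam : Fin l → ℕ → ℕ) (d : ℕ) : Prop :=
  (∀ m, Antitone (lam m)) ∧ (∀ m a, d ≤ a → lam m a = 0) ∧
    ∑ m : Fin l, ∑ a ∈ Finset.range d, lam m a = d

/-- A λ-tableau, encoded by the function sending `r : Fin d` to the node
occupied by the entry `r + 1`: a bijective filling of the diagram by `1, …, d`. -/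
def IsTableau (lam : Fin l → ℕ → ℕ) (t : Fin d → Node l) : Prop :=
  Function.Injective t ∧ Set.range t = diagram lam

/-- A standard λ-tableau: entries increase along rows and down columns of each
component. -/
def IsStandard (lam : Fin l → ℕ → ℕ) (t : Fin d → Node l) : Prop :=
  IsTableau lam t ∧
    ∀ r s : Fin d, (t r).1 = (t s).1 → (t r).2.1 ≤ (t s).2.1 →
      (t r).2.2 ≤ (t s).2.2 → r ≤ s

/-- Lexicographic (row-reading) order on nodes. -/
def NodeLt (N M : Node l) : Prop :=
  N.1 < M.1 ∨ (N.1 = M.1 ∧ (N.2.1 < M.2.1 ∨ (N.2.1 = M.2.1 ∧ N.2.2 < M.2.2)))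

/-- The row-reading tableau `t^λ`: entries `1, …, d` are filled along successive
rows of the components of `λ`, taking the components in order. -/
def IsRowReading (lam : Fin l → ℕ → ℕ) (t : Fin d → Node l) : Prop :=
  IsTableau lam t ∧ ∀ r s : Fin d, r < s → NodeLt (t r) (t s)

/-- The degree of a (standard) tableau: `deg t = Σ_r d_{N_r}(shape of t_{≤ r})`,
which unfolds the recursion `deg t = d_N(λ) + deg (t_{≤ d-1})`, `deg ∅ = 0`. -/
noncomputable def deg (κ : Fin l → ZMod 2) (t : Fin d → Node l) : ℤ :=
  ∑ r : Fin d, dN κ (t '' {s | s ≤ r}) (t r)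

/-- `ε` of a single partition (the sum of `⌊λ_a/2⌋` over rows), as a natural number. -/
def epsPart (d : ℕ) (p : ℕ → ℕ) : ℕ :=
  ∑ a ∈ Finset.range d, p a / 2

/-- `n_i` of a single partition `p` placed in a component with offset `k`:
the number of nodes `(a,b)` of `p` with `k + b - a = i` in `ℤ/2ℤ`. -/
noncomputable def nNodes (k i : ZMod 2) (p : ℕ → ℕ) : ℕ :=
  {N : ℕ × ℕ | N.2 < p N.1 ∧ k + (N.2 : ZMod 2) - (N.1 : ZMod 2) = i}.ncard

/-- The parity `ε(λ)` of an `l`-multipartition. -/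
noncomputable def eps (κ : Fin l → ZMod 2) (d : ℕ) (lam : Fin l → ℕ → ℕ) : ZMod 2 :=
  ((∑ m : Fin l, epsPart d (lam m) : ℕ) : ZMod 2) +
    ((∑ j : Fin l, ∑ m : Fin l, if j < m then nNodes (κ j) (κ m) (lam j) else 0 : ℕ) : ZMod 2)

end Cyclo

open Cyclo in
/-- Let `λ` be an `l`-multipartition of `d ≥ 1` (`l ≥ 1`), let
`t = t^λ` be the row-reading tableau, let `r` range over the entries `1, …, d`
(encoded by `r : Fin d`), let `N = (j, a, b)` be the node occupied by `r` in
`t^λ`, `i` its residue, and let `μ` be the multipartition whose diagram `Y`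
consists of the nodes occupied by `1, …, r`.  Then `Y` has no removable
`i`-nodes below `N`; the number of addable `i`-nodes for `Y` below `N` equals
`β + #{m | j < m ≤ l, k_m = i}` where `β = 1` iff the (1-indexed) column `b` of
`N` is even; and consequently `d_N(μ)` equals that same number. -/
theorem statement0 (l d : ℕ) (hl : 1 ≤ l) (hd : 1 ≤ d)
    (κ : Fin l → ZMod 2) (lam : Fin l → ℕ → ℕ)
    (hlam : IsMultipartition lam d)
    (t : Fin d → Node l) (ht : IsRowReading lam t) (r : Fin d)
    (N : Node l) (hN : N = t r)
    (i : ZMod 2) (hi : i = res κ N)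
    (Y : Set (Node l)) (hY : Y = t '' {s | s ≤ r})
    (β : ℕ) (hβ : β = if (N.2.2 + 1) % 2 = 0 then 1 else 0)
    (c : ℕ) (hc : c = (Finset.univ.filter (fun m : Fin l => N.1 < m ∧ κ m = i)).card) :
    {M | Removable Y M ∧ res κ M = i ∧ Below N M} = ∅ ∧
    {M | Addable Y M ∧ res κ M = i ∧ Below N M}.ncard = β + c ∧
    dN κ Y N = (β : ℤ) + (c : ℤ) := by
  obtain ⟨hanti, -, -⟩ := hlam
  obtain ⟨⟨hinj, hrange⟩, hlt⟩ := ht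
  have hYd : IsDiagram Y := by
    intro m a b a' b' hM ha hb
    rw [hY] at hM ⊢
    obtain ⟨s, hs, hsM⟩ := hM
    have h1 : (m, a, b) ∈ diagram lam := by rw [← hrange]; exact ⟨s, hsM⟩
    have h2 : (m, a', b') ∈ diagram lam := by
      have := hanti m ha
      simp only [diagram, Set.mem_setOf_eq] at h1 ⊢
      omega
    rw [← hrange] at h2
    obtain ⟨s', hs'⟩ := h2
    refine ⟨s', ?_, hs'⟩
    by_contra hcon
    have h3 := hlt s s' (lt_of_le_of_lt hs (not_le.mp hcon))
    rw [hsM, hs'] at h3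
    simp only [NodeLt, lt_self_iff_false, false_or, true_and] at h3
    omega
  have hNY : N ∈ Y := by rw [hY, hN]; exact ⟨r, le_refl r, rfl⟩
  have hbel : ∀ M, Below N M → M ∉ Y := by
    intro M hB hM
    rw [hY] at hM
    obtain ⟨s, hs, rfl⟩ := hM
    rcases lt_or_eq_of_le (show s ≤ r from hs) with h | h
    · have h3 := hlt s r h
      rw [← hN] at h3
      rcases hB with hB | ⟨hB1, hB2⟩ <;> rcases h3 with h3 | ⟨h3, h4⟩
      · exact lt_asymm hB h3
      · exact absurd h3 hB.ne'
      · exact absurd hB1 h3.ne'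
      · omega
    · subst h
      rw [← hN] at hB
      rcases hB with hB | ⟨hB1, hB2⟩
      · exact lt_irrefl _ hB
      · exact lt_irrefl _ hB2
  obtain ⟨j, a, b⟩ := N
  have hadd : ∀ M, (Addable Y M ∧ Below (j, a, b) M) ↔
      (M = (j, a + 1, 0) ∨ (j < M.1 ∧ M = (M.1, 0, 0))) := by
    rintro ⟨m, x, y⟩
    constructor
    · rintro ⟨⟨hnot, hD⟩, hB⟩
      have key : ∀ x' y', x' ≤ x → y' ≤ y → Below (j, a, b) (m, x', y') → x' = x ∧ y' = y := by
        intro x' y' hx hy hb'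
        have := hD m x y x' y' (Set.mem_insert _ _) hx hy
        rcases this with h | h
        · simpa using h
        · exact absurd h (hbel _ hb')
      simp only [Below] at hB key
      have hy : y = 0 := by
        have := key x 0 le_rfl (Nat.zero_le _) hB
        omega
      subst hy
      rcases hB with hB | ⟨hB1, hB2⟩
      · right
        have := key 0 0 (Nat.zero_le _) le_rfl (Or.inl hB)
        simp [hB, this.1.symm]
      · left
        have := key (a + 1) 0 hB2 le_rfl (Or.inr ⟨hB1, by omega⟩)
        simp [hB1, this.1.symm]
    · intro h
      have hB : Below (j, a, b) (m, x, y) := by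
        rcases h with h | ⟨h, h'⟩
        · simp only [Prod.mk.injEq] at h
          obtain ⟨rfl, rfl, rfl⟩ := h
          right; simp
        · left; exact h
      refine ⟨⟨hbel _ hB, ?_⟩, hB⟩
      intro m1 a1 b1 a' b' hM ha hb
      rcases hM with hM | hM
      · simp only [Prod.mk.injEq] at hM
        obtain ⟨rfl, rfl, rfl⟩ := hM
        rcases h with h | ⟨h, h'⟩
        · simp only [Prod.mk.injEq] at h
          obtain ⟨rfl, rfl, rfl⟩ := h
          obtain rfl : b' = 0 := by omega
          by_cases hh : a' = a + 1
          · left; rw [hh]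
          · right
            exact hYd _ _ _ _ _ hNY (by omega) (Nat.zero_le _)
        · simp only [Prod.mk.injEq, true_and] at h'
          left
          simp only [Prod.mk.injEq, true_and]
          omega
      · right; exact hYd _ _ _ _ _ hM ha hb
  have hrem : {M | Removable Y M ∧ res κ M = i ∧ Below (j, a, b) M} = ∅ := by
    ext M
    simp only [Set.mem_setOf_eq, Set.mem_empty_iff_false, iff_false]
    rintro ⟨⟨h, -⟩, -, hB⟩
    exact hbel M hB h
  have hres : res κ (j, a + 1, 0) = i ↔ (b + 1) % 2 = 0 := by
    rw [hi]
    simp only [res]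
    have h1 : (b + 1) % 2 = 0 ↔ ((b + 1 : ℕ) : ZMod 2) = 0 := by
      rw [ZMod.natCast_eq_zero_iff]; omega
    rw [h1]
    push_cast
    generalize κ j = u
    generalize (a : ZMod 2) = v
    generalize (b : ZMod 2) = w
    revert u v w
    decide
  have hcount : {M | Addable Y M ∧ res κ M = i ∧ Below (j, a, b) M}.ncard = β + c := by
    have hset : {M | Addable Y M ∧ res κ M = i ∧ Below (j, a, b) M} =
        (((if (b + 1) % 2 = 0 then {(j, a + 1, 0)} else ∅ : Finset (Node l)) ∪
          (Finset.univ.filter (fun m : Fin l => j < m ∧ κ m = i)).image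
            (fun m => ((m, 0, 0) : Node l)) : Finset (Node l)) : Set (Node l)) := by
      ext M
      have h0 : M ∈ {M | Addable Y M ∧ res κ M = i ∧ Below (j, a, b) M} ↔
          ((Addable Y M ∧ Below (j, a, b) M) ∧ res κ M = i) := by
        simp only [Set.mem_setOf_eq]; tauto
      rw [h0, hadd]
      simp only [Finset.coe_union, Set.mem_union, Finset.mem_coe, Finset.mem_image,
        Finset.mem_filter, Finset.mem_univ, true_and]
      constructor
      · rintro ⟨h | ⟨h, h'⟩, hr⟩
        · left
          rw [h, hres] at hr
          simp [hr, h]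
        · right
          refine ⟨M.1, ⟨h, ?_⟩, h'.symm⟩
          rw [h'] at hr
          simpa [res] using hr
      · rintro (h | ⟨m, ⟨h, h'⟩, rfl⟩)
        · split_ifs at h with hb
          · rw [Finset.mem_singleton] at h
            subst h
            exact ⟨Or.inl rfl, hres.mpr hb⟩
          · simp at h
        · exact ⟨Or.inr ⟨h, rfl⟩, by simpa [res] using h'⟩
    rw [hset, Set.ncard_coe_finset, Finset.card_union_of_disjoint, Finset.card_image_of_injective,
      hβ, hc]
    · simp only []
      split_ifs <;> simp
    · intro x y h
      simpa using h
    · rw [Finset.disjoint_left]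
      intro M h h'
      split_ifs at h
      · simp only [Finset.mem_singleton] at h
        simp [h] at h'
      · simp at h
  refine ⟨hrem, hcount, ?_⟩
  rw [dN, ← hi, hrem, hcount]
  simp
end

section
/- Fix l ≥ 1 and κ = (k_1,…,k_l) ∈ (ℤ/2ℤ)^l, and let λ = (λ^{(1)},…,λ^{(l)}) be an l-multipartition of d. Then the degree of the row-reading standard tableau t^λ is exactly deg(t^λ) = Σ_{m=1}^{l} Σ_{a ≥ 1} ⌊λ^{(m)}_a / 2⌋ + Σ_{j=1}^{l−1} Σ_{m=j+1}^{l} n_{k_m}(λ^{(j)}), where n_i(μ) denotes the number of i-nodes in the Young diagram of a partition μ. -/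
namespace Cyclo

lemma sum_odd (n : ℕ) :
    ∑ b ∈ Finset.range n, (if ((b : ℕ) : ZMod 2) = 1 then (1 : ℤ) else 0) = ((n / 2 : ℕ) : ℤ) := by
  induction n with
  | zero => simp
  | succ n ih =>
    rw [Finset.sum_range_succ, ih]
    have : ((n : ℕ) : ZMod 2) = 1 ↔ n % 2 = 1 := by
      rw [show (1 : ZMod 2) = ((1 : ℕ) : ZMod 2) by simp, ZMod.natCast_eq_natCast_iff']
    simp only [this]
    split_ifs <;> push_cast <;> omega

lemma nNodes_eq (d : ℕ) (k i : ZMod 2) (p : ℕ → ℕ) (hp : ∀ a, d ≤ a → p a = 0) :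
    (nNodes k i p : ℤ) = ∑ a ∈ Finset.range d, ∑ b ∈ Finset.range (p a),
      (if k + (b : ZMod 2) - (a : ZMod 2) = i then (1 : ℤ) else 0) := by
  classical
  rw [Finset.sum_sigma']
  rw [← Finset.sum_filter, Finset.sum_const, nsmul_eq_mul, mul_one]
  unfold nNodes
  congr 1
  set F := ((Finset.range d).sigma fun a => Finset.range (p a)).filter
    (fun x => k + (x.2 : ZMod 2) - (x.1 : ZMod 2) = i) with hF
  have hinj : Function.Injective (fun x : (_ : ℕ) × ℕ => (x.1, x.2)) := by
    rintro ⟨a, b⟩ ⟨a', b'⟩ h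
    simp at h
    simp [h]
  rw [← Finset.card_image_of_injective F hinj, ← Set.ncard_coe_finset]
  congr 1
  ext ⟨a, b⟩
  simp only [Set.mem_ofPred_eq, Finset.coe_image, Set.mem_image, Finset.mem_coe, hF,
    Finset.mem_filter, Finset.mem_sigma, Finset.mem_range, Prod.mk.injEq]
  constructor
  · rintro ⟨h1, h2⟩
    refine ⟨⟨a, b⟩, ⟨⟨?_, h1⟩, h2⟩, rfl, rfl⟩
    change a < d
    by_contra hc
    have := hp a (by omega)
    omega
  · rintro ⟨⟨a', b'⟩, ⟨⟨h0, h1⟩, h2⟩, h3, h4⟩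
    simp only at h3 h4 h1 h2
    subst h3 h4
    exact ⟨h1, h2⟩

/-- nodes up to `(m,a,b)` in reading order. -/
def initSeg {l : ℕ} (lam : Fin l → ℕ → ℕ) (N : Node l) : Set (Node l) :=
  {M | M ∈ diagram lam ∧ ¬ NodeLt N M}

lemma insert_diag {l : ℕ} (lam : Fin l → ℕ → ℕ) (hl : ∀ m, Antitone (lam m)) (m : Fin l)
    (a b : ℕ) (hN : b < lam m a) (M : Node l)
    (hM : M = (m, a + 1, 0) ∨ (m < M.1 ∧ M.2 = (0, 0))) :
    IsDiagram (insert M (initSeg lam (m, a, b))) := by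
  intro x p q p' q' h hp hq
  rcases h with h | h
  · subst h
    rcases hM with hM | hM
    · simp only [Prod.mk.injEq] at hM
      obtain ⟨rfl, rfl, rfl⟩ := hM
      have hq0 : q' = 0 := by omega
      subst hq0
      rcases Nat.lt_or_ge a p' with h | h
      · left
        have : p' = a + 1 := by omega
        rw [this]
      · right
        refine ⟨?_, ?_⟩
        · have := hl x h
          simp only [diagram, Set.mem_ofPred_eq]
          omega
        · simp only [NodeLt, lt_irrefl, false_or, true_and]
          omega
    · left
      simp only [Prod.mk.injEq] at hM
      obtain ⟨_, rfl, rfl⟩ := hM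
      have h1 : p' = 0 := by omega
      have h2 : q' = 0 := by omega
      rw [h1, h2]
  · right
    obtain ⟨h1, h2⟩ := h
    refine ⟨?_, ?_⟩
    · have := hl x hp
      simp only [diagram, Set.mem_ofPred_eq] at h1 ⊢
      omega
    · simp only [NodeLt] at h2 ⊢
      intro h3
      apply h2
      rcases h3 with h3 | ⟨h3, h4⟩
      · exact Or.inl h3
      · exact Or.inr ⟨h3, by omega⟩

lemma addable_below {l : ℕ} (lam : Fin l → ℕ → ℕ) (hl : ∀ m, Antitone (lam m)) (N : Node l)
    (hN : N ∈ diagram lam) (M : Node l) :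
    (Addable (initSeg lam N) M ∧ Below N M) ↔
      (M = (N.1, N.2.1 + 1, 0) ∨ (N.1 < M.1 ∧ M.2 = (0, 0))) := by
  obtain ⟨m, a, b⟩ := N
  obtain ⟨m', a', b'⟩ := M
  simp only [diagram, Set.mem_ofPred_eq] at hN
  constructor
  · rintro ⟨⟨h1, h2⟩, h3⟩
    rcases h3 with h3 | ⟨h3, h4⟩
    · right
      refine ⟨h3, ?_⟩
      have := h2 m' a' b' 0 0 (Set.mem_insert _ _) (by omega) (by omega)
      rcases this with h | h
      · simp at h; simp [← h.1, ← h.2]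
      · exact absurd (Or.inl h3) h.2
    · left
      simp only at h3 h4
      subst h3
      have := h2 m a' b' (a+1) 0 (Set.mem_insert _ _) (by omega) (by omega)
      rcases this with h | h
      · simp at h; simp [← h.1, ← h.2]
      · exact absurd (Or.inr ⟨rfl, Or.inl (by simp)⟩) h.2
  · rintro (h | ⟨h1, h2⟩)
    · simp only [Prod.mk.injEq] at h
      obtain ⟨rfl, rfl, rfl⟩ := h
      refine ⟨⟨fun h => h.2 (Or.inr ⟨rfl, Or.inl (by simp)⟩), ?_⟩, Or.inr ⟨rfl, by simp⟩⟩
      exact insert_diag lam hl _ a b hN _ (Or.inl rfl)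
    · simp only [Prod.mk.injEq] at h1 h2
      obtain ⟨rfl, rfl⟩ := h2
      refine ⟨⟨fun h => h.2 (Or.inl h1), ?_⟩, Or.inl h1⟩
      exact insert_diag lam hl _ a b hN _ (Or.inr ⟨h1, rfl⟩)

lemma not_removable_below {l : ℕ} (lam : Fin l → ℕ → ℕ) (N M : Node l) :
    ¬ (Removable (initSeg lam N) M ∧ Below N M) := by
  rintro ⟨h, h2⟩
  refine h.1.2 ?_
  rcases h2 with h2 | h2
  · exact Or.inl h2
  · exact Or.inr ⟨h2.1, Or.inl h2.2⟩

lemma dN_eq {l : ℕ} (κ : Fin l → ZMod 2) (lam : Fin l → ℕ → ℕ) (hl : ∀ m, Antitone (lam m))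
    (N : Node l) (hN : N ∈ diagram lam) :
    dN κ (initSeg lam N) N = (if ((N.2.2 : ℕ) : ZMod 2) = 1 then (1 : ℤ) else 0) +
      ∑ m : Fin l, if N.1 < m then (if res κ N = κ m then (1 : ℤ) else 0) else 0 := by
  classical
  have hR : {M | Removable (initSeg lam N) M ∧ res κ M = res κ N ∧ Below N M} = ∅ := by
    ext M
    simp only [Set.mem_ofPred_eq, Set.mem_empty_iff_false, iff_false]
    rintro ⟨h1, _, h2⟩
    exact not_removable_below lam N M ⟨h1, h2⟩
  set G : Finset (Fin l) := Finset.univ.filter (fun m => N.1 < m ∧ res κ N = κ m) with hG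
  have hinj : Function.Injective (fun m : Fin l => ((m, 0, 0) : Node l)) := by
    intro x y h
    simpa using h
  set A : Finset (Node l) :=
    if ((N.2.2 : ℕ) : ZMod 2) = 1 then {(N.1, N.2.1 + 1, 0)} else ∅ with hA
  have key : ∀ k x y : ZMod 2, (k + 0 - (x + 1) = k + y - x) ↔ y = 1 := by decide
  have hS : {M | Addable (initSeg lam N) M ∧ res κ M = res κ N ∧ Below N M} =
      ((A ∪ G.image (fun m : Fin l => ((m, 0, 0) : Node l)) : Finset (Node l)) : Set (Node l)) := by
    ext M
    have h := addable_below lam hl N hN M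
    have h1 : (Addable (initSeg lam N) M ∧ res κ M = res κ N ∧ Below N M) ↔
        ((M = (N.1, N.2.1 + 1, 0) ∨ (N.1 < M.1 ∧ M.2 = (0, 0))) ∧ res κ M = res κ N) := by
      rw [← h]; tauto
    rw [Set.mem_ofPred_eq, h1, Finset.mem_coe, Finset.mem_union, or_and_right]
    refine or_congr ?_ ?_
    · have : M = (N.1, N.2.1 + 1, 0) → (res κ M = res κ N ↔ ((N.2.2 : ℕ) : ZMod 2) = 1) := by
        rintro rfl
        have := key (κ N.1) (N.2.1 : ZMod 2) (N.2.2 : ZMod 2)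
        simpa [res] using this
      rw [and_congr_right this, hA]
      split_ifs with hh <;> simp [hh]
    · obtain ⟨m', a', b'⟩ := M
      simp only [Finset.mem_image, hG, Finset.mem_filter, Finset.mem_univ, true_and, Prod.mk.injEq]
      constructor
      · rintro ⟨⟨h4, rfl, rfl⟩, h3⟩
        exact ⟨m', ⟨h4, by rw [← h3]; simp [res]⟩, rfl, rfl, rfl⟩
      · rintro ⟨x, ⟨h4, h2⟩, rfl, rfl, rfl⟩
        exact ⟨⟨h4, rfl, rfl⟩, by rw [h2]; simp [res]⟩
  have hdisj : Disjoint A (G.image (fun m : Fin l => ((m, 0, 0) : Node l))) := by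
    rw [Finset.disjoint_left]
    intro M h1 h2
    rw [hA] at h1
    simp only [Finset.mem_image] at h2
    obtain ⟨x, _, rfl⟩ := h2
    split_ifs at h1 <;> simp at h1
  unfold dN
  rw [hR, hS, Set.ncard_coe_finset, Finset.card_union_of_disjoint hdisj,
    Finset.card_image_of_injective _ hinj, Set.ncard_empty]
  have hGc : (G.card : ℤ) =
      ∑ m : Fin l, if N.1 < m then (if res κ N = κ m then (1 : ℤ) else 0) else 0 := by
    rw [hG, Finset.card_filter]
    push_cast
    refine Finset.sum_congr rfl fun m _ => ?_
    split_ifs <;> simp_all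
  have hAc : (A.card : ℤ) = (if ((N.2.2 : ℕ) : ZMod 2) = 1 then (1 : ℤ) else 0) := by
    rw [hA]; split_ifs <;> simp
  push_cast
  rw [hGc, hAc]
  simp

end Cyclo

open Cyclo in
/-- For an `l`-multipartition `λ` of `d` (`l ≥ 1`), the degree
of the row-reading standard tableau `t^λ` equals exactly
`Σ_m Σ_a ⌊λ^(m)_a / 2⌋ + Σ_{j < m} n_{k_m}(λ^(j))`. -/
theorem statement1 (l d : ℕ) (hl : 1 ≤ l)
    (κ : Fin l → ZMod 2) (lam : Fin l → ℕ → ℕ)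
    (hlam : IsMultipartition lam d)
    (t : Fin d → Node l) (ht : IsRowReading lam t) :
    deg κ t =
      ((∑ m : Fin l, epsPart d (lam m) : ℕ) : ℤ) +
      ((∑ j : Fin l, ∑ m : Fin l, if j < m then nNodes (κ j) (κ m) (lam j) else 0 : ℕ) : ℤ) := by
  classical
  obtain ⟨⟨hinj, hrange⟩, hlt⟩ := ht
  obtain ⟨hanti, hzero, -⟩ := hlam
  have hmem : ∀ r, t r ∈ diagram lam := fun r => hrange ▸ Set.mem_range_self r
  have hasymm : ∀ N M : Node l, NodeLt N M → ¬ NodeLt M N := by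
    rintro ⟨m, a, b⟩ ⟨m', a', b'⟩ h1 h2
    simp only [NodeLt, Fin.lt_def, Fin.ext_iff] at h1 h2
    omega
  have hirr : ∀ N : Node l, ¬ NodeLt N N := fun N h => hasymm N N h h
  have hseg : ∀ r, t '' {s | s ≤ r} = initSeg lam (t r) := by
    intro r
    ext M
    constructor
    · rintro ⟨s, hs, rfl⟩
      refine ⟨hmem s, fun h => ?_⟩
      rcases lt_or_eq_of_le (show s ≤ r from hs) with h1 | h1
      · exact hasymm _ _ h (hlt _ _ h1)
      · subst h1; exact hirr _ h
    · rintro ⟨h1, h2⟩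
      rw [← hrange] at h1
      obtain ⟨s, rfl⟩ := h1
      refine ⟨s, ?_, rfl⟩
      by_contra hc
      exact h2 (hlt _ _ (not_le.mp hc))
  set f : Node l → ℤ := fun N => (if ((N.2.2 : ℕ) : ZMod 2) = 1 then (1 : ℤ) else 0) +
      ∑ m : Fin l, if N.1 < m then (if res κ N = κ m then (1 : ℤ) else 0) else 0 with hf
  have h1 : deg κ t = ∑ r : Fin d, f (t r) := by
    unfold deg
    refine Finset.sum_congr rfl fun r _ => ?_
    rw [hseg, dN_eq κ lam hanti _ (hmem r)]
  have h2 : ∑ r : Fin d, f (t r) =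
      ∑ m : Fin l, ∑ a ∈ Finset.range d, ∑ b ∈ Finset.range (lam m a), f (m, a, b) := by
    simp_rw [Finset.sum_sigma']
    refine Finset.sum_bij (fun r _ => ⟨(t r).1, (t r).2.1, (t r).2.2⟩) ?_ ?_ ?_ ?_
    · intro r _
      have h := hmem r
      simp only [diagram, Set.mem_ofPred_eq] at h
      simp only [Finset.mem_sigma, Finset.mem_univ, Finset.mem_range, true_and]
      refine ⟨?_, h⟩
      by_contra hc
      have := hzero (t r).1 (t r).2.1 (by omega)
      omega
    · intro r _ s _ h
      apply hinj
      simp only [Sigma.mk.injEq, heq_eq_eq] at h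
      exact Prod.ext h.1 (Prod.ext h.2.1 h.2.2)
    · rintro ⟨m, a, b⟩ h
      simp only [Finset.mem_sigma, Finset.mem_univ, Finset.mem_range, true_and] at h
      have h3 : ((m, a, b) : Node l) ∈ diagram lam := h.2
      rw [← hrange] at h3
      obtain ⟨r, hr⟩ := h3
      exact ⟨r, Finset.mem_univ _, by rw [hr]⟩
    · intro r _
      rfl
  rw [h1, h2]
  push_cast
  rw [← Finset.sum_add_distrib]
  refine Finset.sum_congr rfl fun m _ => ?_
  simp only [hf, Finset.sum_add_distrib]
  congr 1
  · unfold epsPart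
    push_cast
    refine Finset.sum_congr rfl fun a _ => ?_
    have := sum_odd (lam m a)
    push_cast at this
    exact this
  · have h3 : ∀ a ∈ Finset.range d, (∑ b ∈ Finset.range (lam m a), ∑ m' : Fin l,
        if m < m' then (if res κ (m, a, b) = κ m' then (1 : ℤ) else 0) else 0) =
        ∑ m' : Fin l, ∑ b ∈ Finset.range (lam m a),
        if m < m' then (if res κ (m, a, b) = κ m' then (1 : ℤ) else 0) else 0 :=
      fun a _ => Finset.sum_comm
    rw [Finset.sum_congr rfl h3, Finset.sum_comm]
    refine Finset.sum_congr rfl fun m' _ => ?_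
    split_ifs with h
    · rw [nNodes_eq d _ _ _ (hzero m)]
      rfl
    · simp
end

section
/- Fix l ≥ 1 and κ = (k_1,…,k_l) ∈ (ℤ/2ℤ)^l, and let λ be an l-multipartition of d. Then any two standard λ-tableaux s and t satisfy deg(s) ≡ deg(t) (mod 2); in particular, the degrees of all standard λ-tableaux have the same parity, namely the parity of deg(t^λ) for the row-reading tableau t^λ. -/
namespace Cyclo

variable {l d : ℕ}

/-- indicator in `ZMod 2` -/
noncomputable def ind (P : Prop) : ZMod 2 := by
  classical exact if P then 1 else 0

lemma ind_true {P : Prop} (h : P) : ind P = 1 := by simp [ind, h]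
lemma ind_false {P : Prop} (h : ¬ P) : ind P = 0 := by simp [ind, h]
lemma ind_congr {P Q : Prop} (h : P ↔ Q) : ind P = ind Q := by rw [propext h]
lemma z2 (x : ZMod 2) : x + x = 0 := by revert x; decide

lemma ind_flip (x i : ZMod 2) : ind (x - 1 = i) = ind (x = i) + 1 := by
  by_cases h : x = i
  · rw [ind_true h, ind_false]
    · decide
    · subst h; revert x; decide
  · rw [ind_false h, ind_true]
    · decide
    · revert x i; decide

def RA (p : ℕ → ℕ) (a : ℕ) : Prop := a = 0 ∨ p a < p (a - 1)
def RR (p : ℕ → ℕ) (a : ℕ) : Prop := p (a + 1) < p a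

lemma col_aux (p : ℕ → ℕ) (hp : Antitone p) (k i : ZMod 2) (c : ℕ) (hc : RA p c) (j : ℕ) :
    (∑ a ∈ Finset.Ico c (c + j), (ind (RA p a ∧ k + (p a : ZMod 2) - (a : ZMod 2) = i)
      + ind (RR p a ∧ k + (p a : ZMod 2) - 1 - (a : ZMod 2) = i)))
      + ind (RA p (c + j) ∧ k + (p (c + j) : ZMod 2) - ((c + j : ℕ) : ZMod 2) = i)
    = ind (k + (p (c + j) : ZMod 2) - ((c + j : ℕ) : ZMod 2) = i) + (j : ZMod 2) := by
  induction j with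
  | zero => simp [hc]
  | succ j ih =>
    rw [← add_assoc c j 1, Finset.sum_Ico_succ_top (by omega)]
    generalize hn : c + j = n at *
    set x : ZMod 2 := k + (p n : ZMod 2) - (n : ZMod 2) with hx
    have key : ind (RR p n ∧ k + (p n : ZMod 2) - 1 - (n : ZMod 2) = i)
        + ind (RA p (n + 1) ∧ k + (p (n + 1) : ZMod 2) - ((n + 1 : ℕ) : ZMod 2) = i)
        = ind (x = i) + ind (k + (p (n + 1) : ZMod 2) - ((n + 1 : ℕ) : ZMod 2) = i) + 1 := by
      have e1 : k + (p n : ZMod 2) - 1 - (n : ZMod 2) = x - 1 := by rw [hx]; ring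
      rw [e1]
      by_cases h : p (n + 1) < p n
      · have h1 : RR p n := h
        have h2 : RA p (n + 1) := Or.inr h
        simp only [h1, h2, true_and]
        rw [ind_flip]; ring
      · have h1 : ¬ RR p n := h
        have h2 : ¬ RA p (n + 1) := by
          rintro (h2 | h2)
          · omega
          · exact h h2
        have h3 : p (n + 1) = p n := le_antisymm (hp (Nat.le_succ n)) (not_lt.mp h)
        rw [ind_false (fun q => h1 q.1), ind_false (fun q => h2 q.1), h3]
        have e2 : k + (p n : ZMod 2) - ((n + 1 : ℕ) : ZMod 2) = x - 1 := by
          rw [hx]; push_cast; ring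
        rw [e2, ind_flip]
        have := z2 (ind (x = i) + 1)
        linear_combination -this
    have hz := z2 (ind (x = i))
    push_cast at key ih ⊢
    linear_combination ih + key + hz

lemma col (p : ℕ → ℕ) (hp : Antitone p) (k i : ZMod 2) (c : ℕ) (hc : RA p c) (n : ℕ)
    (hcn : c ≤ n) (hn : p n = 0) :
    ∑ a ∈ Finset.range (n + 1), (ind ((RA p a ∧ k + (p a : ZMod 2) - (a : ZMod 2) = i) ∧ c ≤ a)
      + ind ((RR p a ∧ k + (p a : ZMod 2) - 1 - (a : ZMod 2) = i) ∧ c ≤ a))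
    = ind (k - (c : ZMod 2) = i) := by
  have h := col_aux p hp k i c hc (n + 1 - c)
  have e : c + (n + 1 - c) = n + 1 := by omega
  rw [e] at h
  have hn1 : p (n + 1) = 0 := by have := hp (Nat.le_succ n); simp at this; omega
  have hA : ¬ RA p (n + 1) := by
    rintro (q | q)
    · omega
    · simp [hn, hn1] at q
  rw [ind_false (fun q => hA q.1), add_zero, hn1] at h
  have hs : ∑ a ∈ Finset.range (n + 1),
      (ind ((RA p a ∧ k + (p a : ZMod 2) - (a : ZMod 2) = i) ∧ c ≤ a)
      + ind ((RR p a ∧ k + (p a : ZMod 2) - 1 - (a : ZMod 2) = i) ∧ c ≤ a))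
      = ∑ a ∈ Finset.Ico c (n + 1), (ind (RA p a ∧ k + (p a : ZMod 2) - (a : ZMod 2) = i)
      + ind (RR p a ∧ k + (p a : ZMod 2) - 1 - (a : ZMod 2) = i)) := by
    symm
    rw [Finset.sum_congr rfl (g := fun a =>
      (ind ((RA p a ∧ k + (p a : ZMod 2) - (a : ZMod 2) = i) ∧ c ≤ a)
      + ind ((RR p a ∧ k + (p a : ZMod 2) - 1 - (a : ZMod 2) = i) ∧ c ≤ a)))]
    · apply Finset.sum_subset
      · intro a ha; simp at ha ⊢; omega
      · intro a ha hb
        have : ¬ c ≤ a := by simp at ha hb; omega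
        rw [ind_false (fun q => this q.2), ind_false (fun q => this q.2), add_zero]
    · intro a ha
      have : c ≤ a := (Finset.mem_Ico.mp ha).1
      simp [this]
  rw [hs, h]
  have e3 : ((n + 1 : ℕ) : ZMod 2) = (c : ZMod 2) + ((n + 1 - c : ℕ) : ZMod 2) := by
    rw [← Nat.cast_add, e]
  rw [e3]
  generalize ((n + 1 - c : ℕ) : ZMod 2) = j
  generalize (c : ZMod 2) = c'
  have hj : j = 0 ∨ j = 1 := by revert j; decide
  rcases hj with rfl | rfl
  · simp
  · have : k + ((0 : ℕ) : ZMod 2) - (c' + 1) = (k - c') - 1 := by push_cast; ring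
    rw [this, ind_flip, add_assoc, z2, add_zero]

lemma diag_exists (Y : Set (Node l)) (hf : Y.Finite) (hY : IsDiagram Y) :
    ∃ (p : Fin l → ℕ → ℕ) (n : ℕ), Y = diagram p ∧ (∀ m, Antitone (p m)) ∧
      ∀ m a, n ≤ a → p m a = 0 := by
  classical
  have hex : ∀ m a, ∃ b, (m, a, b) ∉ Y := by
    intro m a
    by_contra hcon
    push Not at hcon
    have hinj : Function.Injective (fun b : ℕ => ((m, a, b) : Node l)) := by
      intro x y h; simpa using h
    exact Set.infinite_of_injective_forall_mem hinj hcon hf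
  have hmem : ∀ m a b, (m, a, b) ∈ Y ↔ b < Nat.find (hex m a) := by
    intro m a b
    constructor
    · intro h
      by_contra hb
      exact Nat.find_spec (hex m a) (hY m a b a _ h le_rfl (not_lt.mp hb))
    · intro h
      exact not_not.mp (Nat.find_min (hex m a) h)
  obtain ⟨n, hn⟩ : ∃ n, ∀ N ∈ Y, N.2.1 < n := by
    obtain ⟨n, hn⟩ := (hf.image (fun N : Node l => N.2.1)).bddAbove
    exact ⟨n + 1, fun N hN => Nat.lt_succ_of_le (hn ⟨N, hN, rfl⟩)⟩
  refine ⟨fun m a => Nat.find (hex m a), n, ?_, ?_, ?_⟩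
  · ext ⟨m, a, b⟩
    exact hmem m a b
  · intro m a a' haa
    by_contra hlt
    push Not at hlt
    have := (hmem m a' _).2 hlt
    have h2 := hY m a' _ a _ this haa le_rfl
    exact Nat.find_spec (hex m a) h2
  · intro m a ha
    by_contra h0
    have := (hmem m a 0).2 (Nat.pos_of_ne_zero h0)
    have := hn _ this
    simp at this; omega

lemma addable_iff (p : Fin l → ℕ → ℕ) (hp : ∀ m, Antitone (p m)) (m : Fin l) (a b : ℕ) :
    Addable (diagram p) (m, a, b) ↔ b = p m a ∧ RA (p m) a := by
  constructor
  · rintro ⟨h1, h2⟩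
    have h1' : p m a ≤ b := by simpa [diagram] using h1
    have hb : b = p m a := by
      rcases h1'.lt_or_eq with h | h
      · have := h2 m a b a (p m a) (Or.inl rfl) le_rfl h1'
        rcases this with h3 | h3
        · simp at h3; omega
        · simp [diagram] at h3
      · exact h.symm
    refine ⟨hb, ?_⟩
    by_cases ha : a = 0
    · exact Or.inl ha
    · right
      have := h2 m a b (a - 1) b (Or.inl rfl) (by omega) le_rfl
      rcases this with h3 | h3
      · simp at h3; omega
      · simp [diagram] at h3; omega
  · rintro ⟨rfl, h⟩
    refine ⟨by simp [diagram], ?_⟩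
    intro m' x y x' y' hxy hx hy
    rcases hxy with hxy | hxy
    · simp only [Prod.mk.injEq] at hxy
      obtain ⟨rfl, rfl, rfl⟩ := hxy
      by_cases hx' : x' = x
      · subst hx'
        rcases hy.lt_or_eq with hy | hy
        · right; simpa [diagram] using hy
        · left; simp [hy]
      · right
        have h1 : p m' x < p m' (x - 1) := by
          rcases h with h | h
          · omega
          · exact h
        have h2 := hp m' (show x' ≤ x - 1 by omega)
        simp only [diagram, Set.mem_setOf_eq]; omega
    · right
      have h2 := hp m' hx
      simp only [diagram, Set.mem_setOf_eq] at hxy ⊢; omega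

lemma removable_iff (p : Fin l → ℕ → ℕ) (hp : ∀ m, Antitone (p m)) (m : Fin l) (a b : ℕ) :
    Removable (diagram p) (m, a, b) ↔ b = p m a - 1 ∧ RR (p m) a := by
  constructor
  · rintro ⟨h1, h2⟩
    have h1' : b < p m a := by simpa [diagram] using h1
    have hb : p m a ≤ b + 1 := by
      by_contra hc
      have := h2 m a (b + 1) a b ⟨by simp only [diagram, Set.mem_setOf_eq]; omega, by simp⟩
        le_rfl (by omega)
      exact this.2 rfl
    refine ⟨by omega, ?_⟩
    by_contra hc
    have := h2 m (a + 1) b a b ⟨by simp only [RR] at hc; simp only [diagram, Set.mem_setOf_eq]; omega, by simp⟩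
        (by omega) le_rfl
    exact this.2 rfl
  · rintro ⟨rfl, h⟩
    simp only [RR] at h
    refine ⟨by simp only [diagram, Set.mem_setOf_eq]; omega, ?_⟩
    rintro m' x y x' y' ⟨hxy, hne⟩ hx hy
    simp only [diagram, Set.mem_setOf_eq] at hxy
    have h2 := hp m' hx
    refine ⟨by simp only [diagram, Set.mem_setOf_eq]; omega, ?_⟩
    intro he
    simp only [Set.mem_singleton_iff, Prod.mk.injEq] at he hne
    obtain ⟨rfl, rfl, rfl⟩ := he
    rcases hx.lt_or_eq with hx | rfl
    · have := hp m' (show x' + 1 ≤ x by omega)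
      omega
    · apply hne
      refine ⟨rfl, rfl, by omega⟩

lemma ncard_rows (S : Set (Node l)) (q : Fin l → ℕ → ℕ) (P : Fin l → ℕ → Prop) (n : ℕ)
    (hS : ∀ m a b, (m, a, b) ∈ S ↔ b = q m a ∧ P m a) (hP : ∀ m a, P m a → a < n) :
    ((S.ncard : ℤ) : ZMod 2) = ∑ m, ∑ a ∈ Finset.range n, ind (P m a) := by
  classical
  have : S = ((((Finset.univ : Finset (Fin l)) ×ˢ Finset.range n).filter
      (fun x => P x.1 x.2)).image (fun x => ((x.1, x.2, q x.1 x.2) : Node l)) : Finset (Node l)) := by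
    ext ⟨m, a, b⟩
    rw [hS]
    simp only [Finset.coe_image, Set.mem_image, Finset.mem_coe, Finset.mem_filter,
      Finset.mem_product, Finset.mem_univ, true_and, Finset.mem_range, Prod.exists,
      Prod.mk.injEq]
    constructor
    · rintro ⟨rfl, h⟩
      exact ⟨m, a, ⟨hP _ _ h, h⟩, rfl, rfl, rfl⟩
    · rintro ⟨m', a', ⟨_, h⟩, rfl, rfl, rfl⟩
      exact ⟨rfl, h⟩
  rw [this, Set.ncard_coe_finset, Finset.card_image_of_injective]
  · rw [Finset.card_filter, ← Finset.sum_product']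
    push_cast
    apply Finset.sum_congr rfl
    intro x _
    simp [ind]
  · rintro ⟨m, a⟩ ⟨m', a'⟩ h
    simp only [Prod.mk.injEq] at h ⊢
    exact ⟨h.1, h.2.1⟩

/-- the parity contribution of a node -/
noncomputable def fN (κ : Fin l → ZMod 2) (N : Node l) : ZMod 2 :=
  ∑ m : Fin l, if N.1 < m then ind (κ m = res κ N)
    else if N.1 = m then ind (κ m - ((N.2.1 + 1 : ℕ) : ZMod 2) = res κ N) else 0

lemma dN_eq_s4 (κ : Fin l → ZMod 2) (Y : Set (Node l)) (hf : Y.Finite) (hY : IsDiagram Y)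
    (N : Node l) (hN : N ∈ Y) (h1 : (N.1, N.2.1 + 1, N.2.2) ∉ Y) :
    ((dN κ Y N : ℤ) : ZMod 2) = fN κ N := by
  obtain ⟨p, n, rfl, hp, hn⟩ := diag_exists Y hf hY
  obtain ⟨m₀, a₀, b₀⟩ := N
  simp only [diagram, Set.mem_setOf_eq, not_lt] at hN h1
  set i := res κ (m₀, a₀, b₀) with hi
  have ha₀ : a₀ < n := by
    by_contra h
    have := hn m₀ a₀ (not_lt.mp h)
    omega
  have hbel : ∀ m a b, Below (m₀, a₀, b₀) ((m, a, b) : Node l) ↔ m₀ < m ∨ (m₀ = m ∧ a₀ < a) := by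
    intro m a b; rfl
  have hAdd := ncard_rows {M | Addable (diagram p) M ∧ res κ M = i ∧ Below (m₀, a₀, b₀) M} p
    (fun m a => (RA (p m) a ∧ κ m + (p m a : ZMod 2) - (a : ZMod 2) = i) ∧
      (m₀ < m ∨ (m₀ = m ∧ a₀ < a))) (n + 1) (by
        intro m a b
        simp only [Set.mem_setOf_eq, addable_iff p hp, hbel, res]
        constructor
        · rintro ⟨⟨rfl, h⟩, h2, h3⟩; exact ⟨rfl, ⟨h, h2⟩, h3⟩
        · rintro ⟨rfl, ⟨h, h2⟩, h3⟩; exact ⟨⟨rfl, h⟩, h2, h3⟩) (by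
        rintro m a ⟨⟨h, _⟩, _⟩
        by_contra hc
        rcases h with h | h
        · omega
        · rw [hn m (a - 1) (by omega)] at h; omega)
  have hRem := ncard_rows {M | Removable (diagram p) M ∧ res κ M = i ∧ Below (m₀, a₀, b₀) M}
    (fun m a => p m a - 1)
    (fun m a => (RR (p m) a ∧ κ m + (p m a : ZMod 2) - 1 - (a : ZMod 2) = i) ∧
      (m₀ < m ∨ (m₀ = m ∧ a₀ < a))) (n + 1) (by
        intro m a b
        simp only [Set.mem_setOf_eq, removable_iff p hp, hbel, res]
        have e : RR (p m) a → κ m + ((p m a - 1 : ℕ) : ZMod 2) - (a : ZMod 2)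
            = κ m + (p m a : ZMod 2) - 1 - (a : ZMod 2) := by
          intro h
          simp only [RR] at h
          rw [Nat.cast_sub (by omega)]; push_cast; ring
        constructor
        · rintro ⟨⟨rfl, h⟩, h2, h3⟩; exact ⟨rfl, ⟨h, (e h) ▸ h2⟩, h3⟩
        · rintro ⟨rfl, ⟨h, h2⟩, h3⟩; exact ⟨⟨rfl, h⟩, (e h).trans h2, h3⟩) (by
        rintro m a ⟨⟨h, _⟩, _⟩
        by_contra hc
        simp only [RR] at h
        rw [hn m a (by omega)] at h; omega)
  unfold dN
  rw [Int.cast_sub, ← hi, hAdd, hRem, sub_eq_add_neg, ZMod.neg_eq_self_mod_two,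
    ← Finset.sum_add_distrib]
  unfold fN
  apply Finset.sum_congr rfl
  intro m _
  rw [← Finset.sum_add_distrib]
  simp only [← hi]
  split_ifs with hlt heq
  · have := col (p m) (hp m) (κ m) i 0 (Or.inl rfl) n (by omega) (hn m n le_rfl)
    simpa [hlt] using this
  · subst heq
    have := col (p m₀) (hp m₀) (κ m₀) i (a₀ + 1) (Or.inr (by simp; omega)) n (by omega)
      (hn m₀ n le_rfl)
    rw [← this]
    apply Finset.sum_congr rfl
    intro a _
    simp [Nat.succ_le_iff]
  · apply Finset.sum_eq_zero
    intro a _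
    rw [ind_false, ind_false, add_zero]
    · rintro ⟨_, h | h⟩
      · exact hlt h
      · exact heq h.1
    · rintro ⟨_, h | h⟩
      · exact hlt h
      · exact heq h.1

lemma deg_eq (κ : Fin l → ZMod 2) (lam : Fin l → ℕ → ℕ) (hlam : ∀ m, Antitone (lam m))
    (t : Fin d → Node l) (ht : IsStandard lam t) :
    ((deg κ t : ℤ) : ZMod 2) = ∑ᶠ N ∈ diagram lam, fN κ N := by
  obtain ⟨⟨hinj, hr⟩, hst⟩ := ht
  rw [← hr, finsum_mem_range hinj, finsum_eq_sum_of_fintype]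
  unfold deg
  rw [Int.cast_sum]
  apply Finset.sum_congr rfl
  intro r _
  apply dN_eq_s4
  · exact (Set.toFinite _).image _
  · rintro m a b a' b' ⟨s, hs, hsN⟩ ha hb
    have hmem : (m, a, b) ∈ diagram lam := by rw [← hr, ← hsN]; exact ⟨s, rfl⟩
    have hmem' : (m, a', b') ∈ diagram lam := by
      have := hlam m ha
      simp only [diagram, Set.mem_setOf_eq] at hmem ⊢
      omega
    rw [← hr] at hmem'
    obtain ⟨s', hs'⟩ := hmem'
    refine ⟨s', ?_, hs'⟩
    have := hst s' s (by rw [hs', hsN]) (by rw [hs', hsN]; exact ha) (by rw [hs', hsN]; exact hb)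
    exact le_trans this hs
  · exact ⟨r, le_refl r, rfl⟩
  · rintro ⟨s, hs, hsN⟩
    have h1 := hst r s (by rw [hsN]) (by rw [hsN]; simp) (by rw [hsN])
    have h2 : s = r := le_antisymm hs h1
    rw [h2] at hsN
    have := congrArg (fun N : Node l => N.2.1) hsN
    simp at this

lemma rowReading_standard (lam : Fin l → ℕ → ℕ) (t : Fin d → Node l) (h : IsRowReading lam t) :
    IsStandard lam t := by
  refine ⟨h.1, ?_⟩
  intro r s h1 h2 h3
  by_contra hc
  rcases h.2 s r (not_le.mp hc) with h4 | ⟨_, h4 | ⟨_, h4⟩⟩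
  · rw [h1] at h4; exact lt_irrefl _ h4
  · omega
  · omega

end Cyclo

open Cyclo in
/-- For any `l`-multipartition `λ` of `d` (`l ≥ 1`), any two
standard `λ`-tableaux `s` and `t` satisfy `deg s ≡ deg t (mod 2)`; in
particular every standard `λ`-tableau has the same parity of degree as the
row-reading tableau `t^λ`. -/
theorem statement4 (l d : ℕ) (hl : 1 ≤ l)
    (κ : Fin l → ZMod 2) (lam : Fin l → ℕ → ℕ)
    (hlam : IsMultipartition lam d) :
    (∀ s t : Fin d → Node l, IsStandard lam s → IsStandard lam t →
      ((deg κ s : ℤ) : ZMod 2) = ((deg κ t : ℤ) : ZMod 2)) ∧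
    (∀ t u : Fin d → Node l, IsStandard lam t → IsRowReading lam u →
      ((deg κ t : ℤ) : ZMod 2) = ((deg κ u : ℤ) : ZMod 2)) := by
  have key : ∀ s t : Fin d → Node l, IsStandard lam s → IsStandard lam t →
      ((deg κ s : ℤ) : ZMod 2) = ((deg κ t : ℤ) : ZMod 2) := by
    intro s t hs ht
    rw [deg_eq κ lam hlam.1 s hs, deg_eq κ lam hlam.1 t ht]
  exact ⟨key, fun t u ht hu => key t u ht (rowReading_standard lam u hu)⟩
end

section
/- Let λ = (λ_1,…,λ_n) be a partition of d (the case l = 1, κ = (0), corresponding to the symmetric group in characteristic 2). Then every standard λ-tableau t satisfies deg(t) ≡ Σ_{a=1}^{n} ⌊λ_a/2⌋ (mod 2). -/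
/-!
Core definitions for a single partition (the case `l = 1`, `κ = (0)` of the
paper, i.e. the symmetric group in quantum characteristic 2; residues mod 2).
Nodes are 0-indexed: the node `(a, b)` denotes the box in row `a+1`,
column `b+1` of the paper's 1-indexed conventions.
-/

/-- A node `(row, column)`, 0-indexed. -/
abbrev SNode := ℕ × ℕ

namespace Sym2Char

/-- The residue `(b - a) mod 2` of a node `(a, b)`. -/
def res (N : SNode) : ZMod 2 := (N.2 : ZMod 2) - (N.1 : ZMod 2)

/-- A set of nodes is (the Young diagram of) a partition iff it is downward
closed in rows and columns. -/
def IsDiagram (Y : Set SNode) : Prop :=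
  ∀ a b a' b', (a, b) ∈ Y → a' ≤ a → b' ≤ b → (a', b') ∈ Y

/-- `M` is an addable node for the diagram `Y`. -/
def Addable (Y : Set SNode) (M : SNode) : Prop :=
  M ∉ Y ∧ IsDiagram (insert M Y)

/-- `M` is a removable node of the diagram `Y`. -/
def Removable (Y : Set SNode) (M : SNode) : Prop :=
  M ∈ Y ∧ IsDiagram (Y \ {M})

/-- `M` is below `N`: strictly lower row. -/
def Below (N M : SNode) : Prop := N.1 < M.1

/-- `d_N(Y)`: the number of addable nodes for `Y` below `N` of the same residue
as `N`, minus the number of removable nodes of `Y` below `N` of the same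
residue as `N`. -/
noncomputable def dN (Y : Set SNode) (N : SNode) : ℤ :=
  ({M | Addable Y M ∧ res M = res N ∧ Below N M}.ncard : ℤ)
    - ({M | Removable Y M ∧ res M = res N ∧ Below N M}.ncard : ℤ)

/-- The Young diagram of a partition with parts `p a` (0-indexed rows). -/
def diagram (p : ℕ → ℕ) : Set SNode := {N | N.2 < p N.1}

/-- A λ-tableau, encoded by the function sending `r : Fin d` to the node
occupied by the entry `r + 1`: a bijective filling of the diagram by `1, …, d`. -/
def IsTableau (p : ℕ → ℕ) (t : Fin d → SNode) : Prop :=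
  Function.Injective t ∧ Set.range t = diagram p

/-- A standard tableau: entries increase along rows and down columns. -/
def IsStandard (p : ℕ → ℕ) (t : Fin d → SNode) : Prop :=
  IsTableau p t ∧
    ∀ r s : Fin d, (t r).1 ≤ (t s).1 → (t r).2 ≤ (t s).2 → r ≤ s

/-- Lexicographic (row-reading) order on nodes. -/
def NodeLt (N M : SNode) : Prop :=
  N.1 < M.1 ∨ (N.1 = M.1 ∧ N.2 < M.2)

/-- The row-reading tableau `t^λ`: `1, …, d` are filled along successive rows
of `λ`, from top to bottom. -/
def IsRowReading (p : ℕ → ℕ) (t : Fin d → SNode) : Prop :=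
  IsTableau p t ∧ ∀ r s : Fin d, r < s → NodeLt (t r) (t s)

/-- The degree of a (standard) tableau: `deg t = Σ_r d_{N_r}(shape of t_{≤ r})`,
which unfolds the recursion `deg t = d_N(λ) + deg (t_{≤ d-1})`, `deg ∅ = 0`. -/
noncomputable def deg (t : Fin d → SNode) : ℤ :=
  ∑ r : Fin d, dN (t '' {s | s ≤ r}) (t r)

end Sym2Char

namespace Sym2Char

theorem isDiagram_diagram {q : ℕ → ℕ} (hq : Antitone q) : IsDiagram (diagram q) := by
  intro a b a' b' h ha hb
  simp only [diagram, Set.mem_setOf_eq] at h ⊢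
  have := hq ha
  omega

theorem addable_succ_iff {q : ℕ → ℕ} (hq : Antitone q) (k c : ℕ) :
    Addable (diagram q) (k + 1, c) ↔ c = q (k + 1) ∧ q (k + 1) < q k := by
  constructor
  · rintro ⟨h1, h2⟩
    simp only [diagram, Set.mem_setOf_eq, not_lt] at h1
    have h3 := h2 (k + 1) c k c (Or.inl rfl) (by omega) le_rfl
    have h4 : c < q k := by
      rcases h3 with h3 | h3
      · simp at h3
      · exact h3
    have h5 : c = q (k + 1) := by
      by_contra hne
      have h6 := h2 (k + 1) c (k + 1) (q (k + 1)) (Or.inl rfl) le_rfl h1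
      rcases h6 with h6 | h6
      · simp at h6; omega
      · simp [diagram] at h6
    exact ⟨h5, by omega⟩
  · rintro ⟨rfl, h⟩
    refine ⟨by simp [diagram], ?_⟩
    intro a b a' b' hab ha hb
    rcases hab with hab | hab
    · simp only [Prod.mk.injEq] at hab
      obtain ⟨rfl, rfl⟩ := hab
      by_cases hh : a' = k + 1 ∧ b' = q (k + 1)
      · left; rw [hh.1, hh.2]
      · right
        simp only [diagram, Set.mem_setOf_eq]
        by_cases h7 : a' = k + 1
        · subst h7; simp at hh; omega
        · have := hq (show a' ≤ k by omega)
          omega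
    · right
      exact isDiagram_diagram hq a b a' b' hab ha hb

theorem removable_iff {q : ℕ → ℕ} (hq : Antitone q) (k c : ℕ) :
    Removable (diagram q) (k, c) ↔ c = q k - 1 ∧ q (k + 1) < q k := by
  constructor
  · rintro ⟨h1, h2⟩
    simp only [diagram, Set.mem_setOf_eq] at h1
    have h3 : ¬ (c + 1 < q k) := by
      intro h
      have := h2 k (c + 1) k c ⟨h, by simp⟩ le_rfl (by omega)
      exact this.2 rfl
    have h4 : ¬ (c < q (k + 1)) := by
      intro h
      have := h2 (k + 1) c k c ⟨h, by simp⟩ (by omega) le_rfl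
      exact this.2 rfl
    omega
  · rintro ⟨rfl, h⟩
    refine ⟨by simp [diagram]; omega, ?_⟩
    intro a b a' b' hab ha hb
    refine ⟨isDiagram_diagram hq a b a' b' hab.1 ha hb, ?_⟩
    intro he
    simp only [Set.mem_singleton_iff, Prod.mk.injEq] at he
    obtain ⟨rfl, rfl⟩ := he
    obtain ⟨h5, h6⟩ := hab
    simp only [diagram, Set.mem_setOf_eq] at h5
    simp only [Set.mem_singleton_iff, Prod.mk.injEq, not_and] at h6
    rcases Nat.lt_or_ge a' a with h7 | h7
    · have := hq (show a' + 1 ≤ a by omega)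
      omega
    · have h8 : a = a' := by omega
      subst h8
      have := h6 rfl
      omega

theorem pair_parity (x y : ℕ) (k : ℕ) (i : ZMod 2) (h : x ≤ y) :
    (if x < y ∧ res (k + 1, x) = i then (1 : ZMod 2) else 0)
      + (if x < y ∧ res (k, y - 1) = i then (1 : ZMod 2) else 0) = (y : ZMod 2) - x := by
  rcases h.lt_or_eq with h | h
  · obtain ⟨m, rfl⟩ : ∃ m, y = m + 1 := ⟨y - 1, by omega⟩
    simp only [h, true_and, res, Nat.add_sub_cancel]
    push_cast
    generalize (x : ZMod 2) = x
    generalize (m : ZMod 2) = m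
    generalize (k : ZMod 2) = k
    revert x m k i
    decide
  · subst h; simp

theorem dN_eq {q : ℕ → ℕ} (hq : Antitone q) (n : ℕ) (hn : ∀ a, n ≤ a → q a = 0)
    (a b : ℕ) (hb : b + 1 = q a) (hlt : q (a + 1) < q a) :
    ((dN (diagram q) (a, b) : ℤ) : ZMod 2) = (b : ZMod 2) := by
  have han : a < n := by
    by_contra h
    have := hn a (by omega)
    omega
  set i := res (a, b) with hi
  have hA : {M | Addable (diagram q) M ∧ res M = res (a, b) ∧ Below (a, b) M} =
      ((((Finset.Ico a n).filter
        (fun k => q (k + 1) < q k ∧ res (k + 1, q (k + 1)) = i)).image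
        (fun k => ((k + 1, q (k + 1)) : SNode)) : Finset SNode) : Set SNode) := by
    ext ⟨k, c⟩
    simp only [Set.mem_setOf_eq, Finset.coe_image, Set.mem_image, Finset.coe_filter,
      Finset.mem_Ico, Prod.mk.injEq, Below]
    constructor
    · rintro ⟨h1, h2, h3⟩
      obtain ⟨j, rfl⟩ : ∃ j, k = j + 1 := ⟨k - 1, by omega⟩
      obtain ⟨rfl, h4⟩ := (addable_succ_iff hq _ _).1 h1
      refine ⟨j, ⟨⟨by omega, ?_⟩, h4, h2⟩, rfl, rfl⟩
      by_contra h
      have := hn j (by omega)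
      omega
    · rintro ⟨j, ⟨⟨h1, h2⟩, h3, h4⟩, rfl, rfl⟩
      exact ⟨(addable_succ_iff hq _ _).2 ⟨rfl, h3⟩, h4, by omega⟩
  have hR : {M | Removable (diagram q) M ∧ res M = res (a, b) ∧ Below (a, b) M} =
      ((((Finset.Ico (a + 1) n).filter
        (fun k => q (k + 1) < q k ∧ res (k, q k - 1) = i)).image
        (fun k => ((k, q k - 1) : SNode)) : Finset SNode) : Set SNode) := by
    ext ⟨k, c⟩
    simp only [Set.mem_setOf_eq, Finset.coe_image, Set.mem_image, Finset.coe_filter,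
      Finset.mem_Ico, Prod.mk.injEq, Below]
    constructor
    · rintro ⟨h1, h2, h3⟩
      obtain ⟨rfl, h4⟩ := (removable_iff hq _ _).1 h1
      refine ⟨k, ⟨⟨by omega, ?_⟩, h4, h2⟩, rfl, rfl⟩
      by_contra h
      have := hn k (by omega)
      omega
    · rintro ⟨j, ⟨⟨h1, h2⟩, h3, h4⟩, rfl, rfl⟩
      exact ⟨(removable_iff hq _ _).2 ⟨rfl, h3⟩, h4, by omega⟩
  have e1 : (({M | Addable (diagram q) M ∧ res M = res (a, b) ∧ Below (a, b) M}.ncard : ℕ)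
      : ZMod 2) = ∑ k ∈ Finset.Ico a n,
        if q (k + 1) < q k ∧ res (k + 1, q (k + 1)) = i then (1 : ZMod 2) else 0 := by
    rw [hA, Set.ncard_coe_finset, Finset.card_image_of_injective, Finset.natCast_card_filter]
    intro x y h
    simp only [Prod.mk.injEq] at h
    omega
  have e2 : (({M | Removable (diagram q) M ∧ res M = res (a, b) ∧ Below (a, b) M}.ncard : ℕ)
      : ZMod 2) = ∑ k ∈ Finset.Ico (a + 1) n,
        if q (k + 1) < q k ∧ res (k, q k - 1) = i then (1 : ZMod 2) else 0 := by
    rw [hR, Set.ncard_coe_finset, Finset.card_image_of_injective, Finset.natCast_card_filter]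
    intro x y h
    simp only [Prod.mk.injEq] at h
    exact h.1
  have e3 := Finset.sum_eq_sum_Ico_succ_bot han
    (fun k => if q (k + 1) < q k ∧ res (k, q k - 1) = i then (1 : ZMod 2) else 0)
  have hb' : q a - 1 = b := by omega
  rw [if_pos ⟨hlt, by rw [hb']⟩, ← e2] at e3
  have e4 : ∑ k ∈ Finset.Ico a n, ((q k : ZMod 2) - q (k + 1)) = q a := by
    rw [Finset.sum_Ico_eq_sum_range]
    have := Finset.sum_range_sub' (fun j => (q (a + j) : ZMod 2)) (n - a)
    rw [show a + (n - a) = n by omega, hn n le_rfl] at this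
    simpa [add_assoc] using this
  rw [← Finset.sum_congr rfl (fun k _ => pair_parity (q (k + 1)) (q k) k i (hq (Nat.le_succ k))),
    Finset.sum_add_distrib, ← e1, e3, ← hb] at e4
  unfold dN
  push_cast at e4 ⊢
  generalize ((Set.ncard _ : ℕ) : ZMod 2) = x at e4 ⊢
  generalize ((Set.ncard _ : ℕ) : ZMod 2) = y at e4 ⊢
  generalize (b : ZMod 2) = z at e4 ⊢
  revert x y z
  decide

theorem main (n d : ℕ) : ∀ (p : ℕ → ℕ)
    (_ : Antitone p) (_ : ∀ a, n ≤ a → p a = 0)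
    (t : Fin d → SNode) (_ : IsStandard p t),
    ((deg t : ℤ) : ZMod 2) = ((∑ a ∈ Finset.range n, p a / 2 : ℕ) : ZMod 2) := by
  induction d with
  | zero =>
    intro p hp hpn t ht
    have h0 : ∀ a, p a = 0 := by
      intro a
      by_contra h
      have h1 : ((a, 0) : SNode) ∈ diagram p := by simp [diagram]; omega
      rw [← ht.1.2] at h1
      obtain ⟨s, _⟩ := h1
      exact s.elim0
    simp [deg, h0]
  | succ d ih =>
    intro p hp hpn t ht
    obtain ⟨⟨hinj, hrange⟩, hst⟩ := ht
    obtain ⟨a, b, hab⟩ : ∃ a b, t (Fin.last d) = (a, b) := ⟨_, _, rfl⟩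
    have hmem : ((a, b) : SNode) ∈ diagram p := by
      rw [← hrange, ← hab]; exact ⟨_, rfl⟩
    have hmax : ∀ x y, ((x, y) : SNode) ∈ diagram p → a ≤ x → b ≤ y → x = a ∧ y = b := by
      intro x y h hx hy
      rw [← hrange] at h
      obtain ⟨s, hs⟩ := h
      have h1 := hst (Fin.last d) s (by rw [hab, hs]; exact hx) (by rw [hab, hs]; exact hy)
      have h2 : s = Fin.last d := le_antisymm (Fin.le_last s) h1
      rw [h2, hab] at hs
      simp only [Prod.mk.injEq] at hs
      exact ⟨hs.1.symm, hs.2.symm⟩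
    have hba : b < p a := hmem
    have hb : b + 1 = p a := by
      by_contra h
      have := hmax a (b + 1) (show b + 1 < p a by omega) le_rfl (by omega)
      omega
    have hlt : p (a + 1) < p a := by
      by_contra h
      have := hmax (a + 1) b (show b < p (a + 1) by omega) (by omega) le_rfl
      omega
    have han : a < n := by
      by_contra h
      have := hpn a (by omega)
      omega
    have hq1 : ∀ k, (Function.update p a b) k = if k = a then b else p k := by
      intro k; simp [Function.update_apply]
    set q := Function.update p a b with hqdef
    have hqa : Antitone q := by
      apply antitone_nat_of_succ_le
      intro k
      rw [hq1, hq1]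
      have := hp (Nat.le_succ k)
      split_ifs with h1 h2 h2
      · omega
      · subst h1; simp at this; omega
      · subst h2; omega
      · exact this
    have hqn : ∀ k, n ≤ k → q k = 0 := by
      intro k hk
      rw [hq1, if_neg (by omega)]
      exact hpn k hk
    have hstd : IsStandard q (fun r : Fin d => t r.castSucc) := by
      refine ⟨⟨fun x y h => Fin.castSucc_injective d (hinj h), ?_⟩, ?_⟩
      · have hdq : ∀ x y, ((x, y) : SNode) ∈ diagram q ↔
            ((x, y) : SNode) ∈ diagram p ∧ ((x, y) : SNode) ≠ (a, b) := by
          intro x y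
          simp only [diagram, Set.mem_setOf_eq, hq1, ne_eq, Prod.mk.injEq]
          split_ifs with h
          · subst h; simp; omega
          · simp [h]
        ext ⟨x, y⟩
        rw [hdq, ← hrange, ← hab]
        constructor
        · rintro ⟨s, hs⟩
          simp only at hs
          refine ⟨⟨_, hs⟩, ?_⟩
          rw [← hs]
          intro h
          exact (Fin.castSucc_lt_last s).ne (hinj h)
        · rintro ⟨⟨s, hs⟩, h⟩
          induction s using Fin.lastCases with
          | last => exact absurd hs.symm h
          | cast s => exact ⟨s, hs⟩
      · intro r s h1 h2
        exact Fin.castSucc_le_castSucc_iff.1 (hst _ _ h1 h2)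
    have IH := ih q hqa hqn _ hstd
    have hdeg : deg t = deg (fun r : Fin d => t r.castSucc) + dN (diagram p) (a, b) := by
      unfold deg
      rw [Fin.sum_univ_castSucc]
      congr 1
      · apply Finset.sum_congr rfl
        intro r _
        congr 1
        ext N
        constructor
        · rintro ⟨s, hs, rfl⟩
          induction s using Fin.lastCases with
          | last => exact absurd hs (not_le.2 (Fin.castSucc_lt_last r))
          | cast s => exact ⟨s, Fin.castSucc_le_castSucc_iff.1 hs, rfl⟩
        · rintro ⟨s, hs, rfl⟩
          exact ⟨s.castSucc, Fin.castSucc_le_castSucc_iff.2 hs, rfl⟩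
      · rw [hab, ← hrange]
        congr 1
        ext N
        constructor
        · rintro ⟨s, _, rfl⟩; exact ⟨s, rfl⟩
        · rintro ⟨s, rfl⟩; exact ⟨s, Fin.le_last s, rfl⟩
    have hsum : ∑ k ∈ Finset.range n, p k / 2 = ∑ k ∈ Finset.range n, q k / 2 + b % 2 := by
      have : ∀ k ∈ Finset.range n, p k / 2 = q k / 2 + if k = a then b % 2 else 0 := by
        intro k _
        rw [hq1]
        split_ifs with h
        · subst h; omega
        · rfl
      rw [Finset.sum_congr rfl this, Finset.sum_add_distrib, Finset.sum_ite_eq',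
        if_pos (Finset.mem_range.2 han)]
    rw [hdeg, hsum, Int.cast_add, IH, dN_eq hp n hpn a b hb hlt, Nat.cast_add, ZMod.natCast_mod]

end Sym2Char

open Sym2Char in
/-- For a partition `λ = (λ_1, …, λ_n)` of `d`, every standard
`λ`-tableau `t` satisfies `deg t ≡ Σ_{a=1}^n ⌊λ_a/2⌋ (mod 2)`. -/
theorem statement6 (n d : ℕ) (p : ℕ → ℕ)
    (hp : Antitone p) (hpn : ∀ a, n ≤ a → p a = 0)
    (hpd : ∑ a ∈ Finset.range n, p a = d)
    (t : Fin d → SNode) (ht : IsStandard p t) :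
    ((deg t : ℤ) : ZMod 2) = ((∑ a ∈ Finset.range n, p a / 2 : ℕ) : ZMod 2) := by
  exact Sym2Char.main n d p hp hpn t ht
end
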